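/- Let V = F_2^3 and let Aff(V) = V ⋊ GL_3(F_2) be the affine group of V, acting on V by (v, A) · w = v + Aw. Then Aff(V) contains exactly 8 transitive subgroups isomorphic to the simple group GL_3(F_2) of order 168, and any two such subgroups are conjugate by an element of GL_3(F_2) ≤ Aff(V). -/

import Mathlib

/-- The vector space `𝔽_p^n`. -/
abbrev V (p n : ℕ) : Type := Fin n → ZMod p

/-- The affine group `Aff(V) = V ⋊ GL(V)` of `V = 𝔽_p^n`, realised as the group of
affine self-equivalences of `V`; the pair `(v, A)` corresponds to `w ↦ A w + v` and
acts on `V` by evaluation. -/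
abbrev Aff (p n : ℕ) : Type := V p n ≃ᵃ[ZMod p] V p n

open Matrix

/-- The general linear group of `𝔽₂³`. -/
abbrev GLV : Type := V 2 3 ≃ₗ[ZMod 2] V 2 3

/-- The elementary transvection `x ↦ x + x_j e_i` of `𝔽₂³`. -/
def elementary (i j : Fin 3) (h : i ≠ j) : GLV :=
  LinearEquiv.transvection (f := LinearMap.proj j) (v := Pi.single i 1) (by simp [h.symm])

lemma elementary_apply {i j : Fin 3} (h : i ≠ j) (x : V 2 3) (k : Fin 3) :
    elementary i j h x k = x k + if k = i then x j else 0 := by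
  simp [elementary, LinearMap.transvection.apply, Pi.single_apply]

lemma toMatrix'_elementary {i j : Fin 3} (h : i ≠ j) :
    LinearMap.toMatrix' (elementary i j h : V 2 3 →ₗ[ZMod 2] V 2 3) = transvection i j 1 := by
  ext k l
  simp only [LinearMap.toMatrix'_apply, LinearEquiv.coe_coe, elementary_apply, transvection,
    Matrix.add_apply, one_apply, single_apply, Pi.single_apply]
  grind

lemma closure_elementary :
    Subgroup.closure {A : GLV | ∃ i j h, A = elementary i j h} = ⊤ := by
  refine (Subgroup.eq_top_iff' _).2 fun A => ?_
  suffices H : ∃ B ∈ Subgroup.closure {A : GLV | ∃ i j h, A = elementary i j h},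
      LinearMap.toMatrix' (B : V 2 3 →ₗ[ZMod 2] V 2 3) =
        LinearMap.toMatrix' (A : V 2 3 →ₗ[ZMod 2] V 2 3) by
    obtain ⟨B, hB, hBA⟩ := H
    rwa [← LinearEquiv.toLinearMap_injective (LinearMap.toMatrix'.injective hBA)]
  have hA : (LinearMap.toMatrix' (A : V 2 3 →ₗ[ZMod 2] V 2 3)).det ≠ 0 := by
    rw [LinearMap.det_toMatrix']
    exact A.isUnit_det'.ne_zero
  refine diagonal_transvection_induction_of_det_ne_zero
    (fun M => ∃ B ∈ Subgroup.closure {A : GLV | ∃ i j h, A = elementary i j h},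
      LinearMap.toMatrix' (B : V 2 3 →ₗ[ZMod 2] V 2 3) = M) _ hA ?_ ?_ ?_
  · intro D hD
    have hD' : D = 1 := by
      rw [det_diagonal, Finset.prod_ne_zero_iff] at hD
      exact funext fun i => Fin.eq_one_of_ne_zero _ (hD i (Finset.mem_univ i))
    exact ⟨1, one_mem _, by simp [hD']⟩
  · rintro ⟨i, j, hij, c⟩
    obtain rfl | hc := eq_or_ne c 0
    · exact ⟨1, one_mem _, by simp⟩
    · obtain rfl := Fin.eq_one_of_ne_zero c hc
      exact ⟨_, Subgroup.subset_closure ⟨i, j, hij, rfl⟩, toMatrix'_elementary hij⟩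
  · rintro _ _ - - ⟨B, hB, rfl⟩ ⟨C, hC, rfl⟩
    exact ⟨B * C, mul_mem hB hC, LinearMap.toMatrix'_mul _ _⟩

/-- A non-identity involution of `𝔽₂³` fails to commute with one of its conjugates. -/
lemma eq_one_of_commute_conj {a : GLV} (ha : a * a = 1)
    (hc : ∀ b : GLV, Commute a (b * a * b⁻¹)) : a = 1 := by
  by_contra hne
  obtain ⟨v, hv⟩ : ∃ v, a v ≠ v := by
    by_contra! H
    exact hne (LinearEquiv.ext H)
  have haa : ∀ x, a (a x) = x := fun x => congrArg (fun f : GLV => f x) ha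
  have two : ∀ x : V 2 3, x + x = 0 := by decide
  obtain ⟨u, hu⟩ : ∃ u, u = a v + v := ⟨_, rfl⟩
  have hav : a v = u + v := by rw [hu, add_assoc, two, add_zero]
  have hau : a u = u := by rw [hu, map_add, haa, add_comm]
  have hu0 : u ≠ 0 := by rintro rfl; simp [hav] at hv
  have huv : u ≠ v := by rintro rfl; exact hv hau
  have hv0 : v ≠ 0 := by rintro rfl; simp at hv
  obtain ⟨k, hku, hkv⟩ : ∃ k : V 2 3, k ⬝ᵥ u = 1 ∧ k ⬝ᵥ v = 1 := by
    clear hu hav hau hv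
    revert u v
    decide
  let b : GLV := LinearEquiv.transvection (f := dotProductBilin (ZMod 2) (ZMod 2) k) (v := u + v)
    (by simp [hku, hkv]; rfl)
  have hbu : b u = v := by
    simp [b, LinearMap.transvection.apply, hku, ← add_assoc, two]
  have hbv : b v = u := by
    simp [b, LinearMap.transvection.apply, hkv, add_comm u v, ← add_assoc, two]
  have hb_symm_u : b⁻¹ u = v := b.symm_apply_eq.2 hbv.symm
  have hb_symm_v : b⁻¹ v = u := b.symm_apply_eq.2 hbu.symm
  have := congrArg (fun f : GLV => f u) (hc b).eq
  exact hu0 (by simpa [LinearEquiv.mul_apply, hau, hb_symm_u, hav, hbu, hbv] using this)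

/-- The polar form `(u, w) ↦ ∂_w N(u)` of the anisotropic cubic form
`N = x³ + y³ + z³ + x²y + y²z + z²x + xyz` over `𝔽₂`. -/
def cubicPolar (u w : V 2 3) : ZMod 2 :=
  w 0 * (u 1 * u 2 + u 2 + u 0) + w 1 * (u 0 * u 2 + u 0 + u 1) + w 2 * (u 0 * u 1 + u 1 + u 2)

lemma cubicPolar_add_right (u w w' : V 2 3) :
    cubicPolar u (w + w') = cubicPolar u w + cubicPolar u w' := by
  simp only [cubicPolar, Pi.add_apply]
  ring

lemma cubicPolar_add_left (u u' w : V 2 3) :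
    cubicPolar (u + u') w = cubicPolar u w + cubicPolar u' w + Matrix.det (of ![u, u', w]) := by
  have two : (2 : ZMod 2) = 0 := rfl
  simp only [cubicPolar, Pi.add_apply, det_fin_three, of_apply, cons_val]
  linear_combination (w 0 * u 2 * u' 1 + w 1 * u 0 * u' 2 + w 2 * u 1 * u' 0) * two

lemma cubicPolar_self {u : V 2 3} (hu : u ≠ 0) : cubicPolar u u = 1 := by
  revert u
  decide

lemma cubicPolar_zero_left (w : V 2 3) : cubicPolar 0 w = 0 := by
  simp [cubicPolar]

lemma det_map_eq (A : GLV) (u v w : V 2 3) :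
    Matrix.det (of ![A u, A v, A w]) = Matrix.det (of ![u, v, w]) := by
  have hA : LinearMap.det (A : V 2 3 →ₗ[ZMod 2] V 2 3) = 1 :=
    Fin.eq_one_of_ne_zero _ A.isUnit_det'.ne_zero
  have := (Pi.basisFun (ZMod 2) (Fin 3)).det_comp (A : V 2 3 →ₗ[ZMod 2] V 2 3) ![u, v, w]
  rw [hA, one_mul, Pi.basisFun_det_apply, Pi.basisFun_det_apply] at this
  rw [← this]
  congr 1
  ext i
  fin_cases i <;> rfl

lemma det_single_single (k : Fin 3) (v : V 2 3) :
    Matrix.det (of ![Pi.single (k + 1) 1, Pi.single (k + 2) 1, v]) = v k := by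
  fin_cases k <;> simp [det_fin_three]

/-- An alternating biadditive form on `𝔽₂³` is given by a triple product. -/
lemma biadditive_eq_det (B : V 2 3 →+ V 2 3 →+ ZMod 2) (hB : ∀ u, B u u = 0) (u w : V 2 3) :
    B u w = Matrix.det (of ![u, w, fun k => B (Pi.single (k + 1) 1) (Pi.single (k + 2) 1)]) := by
  have expand (f : V 2 3 →+ ZMod 2) (x : V 2 3) : f x = ∑ i, x i * f (Pi.single i 1) := by
    conv_lhs => rw [pi_eq_sum_univ' x, map_sum]
    exact Finset.sum_congr rfl fun i _ => (f.toZModLinearMap 2).map_smul (x i) (Pi.single i 1)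
  have symm (x y : V 2 3) : B x y = B y x := by
    have := hB (x + y)
    simp only [map_add, AddMonoidHom.add_apply, hB, zero_add, add_zero] at this
    rwa [CharTwo.add_eq_zero, eq_comm] at this
  have key : B u w = ∑ i, ∑ j, u i * w j * B (Pi.single i 1) (Pi.single j 1) := by
    have := expand (B.flip w) u
    simp only [AddMonoidHom.flip_apply] at this
    rw [this]
    refine Finset.sum_congr rfl fun i _ => ?_
    rw [expand (B (Pi.single i 1)) w, Finset.mul_sum]
    simp only [mul_assoc]
  have two : (2 : ZMod 2) = 0 := rfl
  rw [key]
  simp only [Fin.sum_univ_three, hB, symm (Pi.single 1 1) (Pi.single 0 1),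
    symm (Pi.single 2 1) (Pi.single 1 1), symm (Pi.single 2 1) (Pi.single 0 1),
    det_fin_three, of_apply, cons_val, Fin.isValue, zero_add, Fin.reduceAdd]
  linear_combination (u 0 * w 2 * B (Pi.single 0 1) (Pi.single 2 1) +
    u 1 * w 0 * B (Pi.single 0 1) (Pi.single 1 1) +
    u 2 * w 1 * B (Pi.single 1 1) (Pi.single 2 1)) * two

lemma defect_add_left (A : GLV) (u u' w : V 2 3) :
    cubicPolar (A.symm (u + u')) (A.symm w) + cubicPolar (u + u') w =
      (cubicPolar (A.symm u) (A.symm w) + cubicPolar u w) +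
        (cubicPolar (A.symm u') (A.symm w) + cubicPolar u' w) := by
  have two : (2 : ZMod 2) = 0 := rfl
  rw [map_add, cubicPolar_add_left, cubicPolar_add_left, det_map_eq A.symm]
  linear_combination (Matrix.det (of ![u, u', w])) * two

/-- The change of the polar form of the anisotropic cubic form under a linear substitution. -/
def polarDefect (A : GLV) : V 2 3 →+ V 2 3 →+ ZMod 2 :=
  AddMonoidHom.mk' (fun u => AddMonoidHom.mk'
      (fun w => cubicPolar (A.symm u) (A.symm w) + cubicPolar u w) fun w w' => by
        simp only [map_add, cubicPolar_add_right]
        ring) fun u u' => by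
    refine AddMonoidHom.ext fun w => ?_
    exact defect_add_left A u u' w

lemma polarDefect_apply (A : GLV) (u w : V 2 3) :
    polarDefect A u w = cubicPolar (A.symm u) (A.symm w) + cubicPolar u w := rfl

lemma polarDefect_self (A : GLV) (u : V 2 3) : polarDefect A u u = 0 := by
  rw [polarDefect_apply]
  obtain rfl | hu := eq_or_ne u 0
  · simp [cubicPolar_zero_left]
  · rw [cubicPolar_self hu, cubicPolar_self (A.symm.map_ne_zero_iff.2 hu)]
    rfl

lemma polarDefect_mul (A B : GLV) (u w : V 2 3) :
    polarDefect (A * B) u w = polarDefect A u w + polarDefect B (A.symm u) (A.symm w) := by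
  have two : (2 : ZMod 2) = 0 := rfl
  have h (x : V 2 3) : (A * B).symm x = B.symm (A.symm x) := rfl
  simp only [polarDefect_apply, h]
  linear_combination (-cubicPolar (A.symm u) (A.symm w)) * two

/-- A 1-cocycle of `GL₃(𝔽₂)` with values in `𝔽₂³`. -/
def IsCocycle (σ : GLV → V 2 3) : Prop := ∀ A B, σ (A * B) = σ A + A (σ B)

/-- A 1-cocycle representing the nontrivial class of `H¹(GL₃(𝔽₂), 𝔽₂³)`. -/
def cubicCocycle (A : GLV) : V 2 3 :=
  fun k => polarDefect A (Pi.single (k + 1) 1) (Pi.single (k + 2) 1)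

lemma polarDefect_eq_det (A : GLV) (u w : V 2 3) :
    polarDefect A u w = Matrix.det (of ![u, w, cubicCocycle A]) :=
  biadditive_eq_det _ (polarDefect_self A) u w

lemma isCocycle_cubicCocycle : IsCocycle cubicCocycle := by
  intro A B
  ext k
  rw [cubicCocycle, polarDefect_mul, polarDefect_eq_det B, ← det_map_eq A]
  simp only [LinearEquiv.apply_symm_apply, det_single_single]
  rfl

lemma IsCocycle.map_one {σ : GLV → V 2 3} (hσ : IsCocycle σ) : σ 1 = 0 := by
  simpa using hσ 1 1

/-- The complement `{(σ(A), A)}` of `𝔽₂³` in the affine group determined by a cocycle `σ`,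
as a section of the projection to the linear part. -/
def IsCocycle.toAff {σ : GLV → V 2 3} (hσ : IsCocycle σ) : GLV →* Aff 2 3 where
  toFun A := A.toAffineEquiv.trans (AffineEquiv.constVAdd (ZMod 2) (V 2 3) (σ A))
  map_one' := by
    ext x : 1
    simp [hσ.map_one]
  map_mul' A B := by
    ext x : 1
    simp [hσ A B]

lemma IsCocycle.toAff_apply {σ : GLV → V 2 3} (hσ : IsCocycle σ) (A : GLV) (x : V 2 3) :
    hσ.toAff A x = σ A + A x := rfl

lemma IsCocycle.toAff_injective {σ : GLV → V 2 3} (hσ : IsCocycle σ) :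
    Function.Injective hσ.toAff := fun A B h => by
  exact congrArg AffineEquiv.linear h

lemma IsCocycle.eq_of_eq_elementary {σ τ : GLV → V 2 3} (hσ : IsCocycle σ) (hτ : IsCocycle τ)
    (h : ∀ i j hij, σ (elementary i j hij) = τ (elementary i j hij)) : σ = τ := by
  have : hσ.toAff = hτ.toAff := by
    refine MonoidHom.eq_of_eqOn_dense closure_elementary ?_
    rintro _ ⟨i, j, hij, rfl⟩
    ext x : 1
    rw [hσ.toAff_apply, hτ.toAff_apply, h]
  ext1 A
  simpa [IsCocycle.toAff_apply] using congrArg (fun f => f A 0) this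

lemma IsCocycle.add_smul_coboundary {σ : GLV → V 2 3} (hσ : IsCocycle σ) (c : ZMod 2) (w : V 2 3) :
    IsCocycle fun A => c • σ A + (A w + w) := by
  intro A B
  have : A w + A w = 0 := CharTwo.add_self_eq_zero _
  simp only [hσ A B, map_add, map_smul, smul_add, LinearEquiv.mul_apply]
  linear_combination (exp := 1) -this

lemma IsCocycle.elementary_apply_source {σ : GLV → V 2 3} (hσ : IsCocycle σ) {i j : Fin 3}
    (hij : i ≠ j) : σ (elementary i j hij) j = 0 := by
  have hsq : elementary i j hij * elementary i j hij = 1 := by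
    ext x l
    have : x j + x j = 0 := CharTwo.add_self_eq_zero _
    simp [elementary_apply, hij.symm, add_assoc]
    grind
  have := congrFun ((hσ _ _).symm.trans ((congrArg σ hsq).trans hσ.map_one)) i
  simp only [Pi.add_apply, elementary_apply, if_true, Pi.zero_apply, ← add_assoc,
    CharTwo.add_self_eq_zero, zero_add] at this
  exact this

lemma IsCocycle.elementary_apply_comm {σ : GLV → V 2 3} (hσ : IsCocycle σ) {i j k : Fin 3}
    (hij : i ≠ j) (hik : i ≠ k) :
    σ (elementary i k hik) j = σ (elementary i j hij) k := by
  have hcomm : elementary i j hij * elementary i k hik =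
      elementary i k hik * elementary i j hij := by
    ext x l
    simp only [LinearEquiv.mul_apply, elementary_apply]
    grind
  have := congrFun (congrArg σ hcomm) i
  simp only [hσ _ _, Pi.add_apply, elementary_apply, if_true] at this
  linear_combination this

lemma IsCocycle.elementary_apply_commutator {σ : GLV → V 2 3} (hσ : IsCocycle σ)
    {i j k : Fin 3} (hij : i ≠ j) (hik : i ≠ k) (hjk : j ≠ k) :
    σ (elementary j k hjk) j = σ (elementary i k hik) i + σ (elementary i j hij) k := by
  have hcomm : elementary i j hij * elementary j k hjk =
      elementary i k hik * elementary j k hjk * elementary i j hij := by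
    ext x l
    simp only [LinearEquiv.mul_apply, elementary_apply]
    grind
  have := congrFun (congrArg σ hcomm) i
  simp only [hσ _ _, LinearEquiv.mul_apply, Pi.add_apply, elementary_apply,
    if_true, hij, hjk.symm, if_false, hσ.elementary_apply_source hjk] at this
  linear_combination this

lemma cubicCocycle_elementary {i j : Fin 3} (h : i ≠ j) :
    cubicCocycle (elementary i j h) = fun k =>
      if k = j then 0 else if k = i then (if j = i + 1 then 1 else 0) else 1 := by
  revert i j
  decide

/-- Every cocycle is a sum of a coboundary and a multiple of `cubicCocycle`. -/
lemma IsCocycle.exists_eq {σ : GLV → V 2 3} (hσ : IsCocycle σ) :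
    ∃ (c : ZMod 2) (w : V 2 3), σ = fun A => c • cubicCocycle A + (A w + w) := by
  have const : ∀ i j k (hij : i ≠ j), i ≠ k → j ≠ k →
      σ (elementary i j hij) k = σ (elementary 0 1 (by decide)) 2 := by
    have swap {i j k} (hij : i ≠ j) (hik : i ≠ k) (hjk : j ≠ k) :
        σ (elementary i j hij) k = σ (elementary j i hij.symm) k := by
      have h₁ := hσ.elementary_apply_commutator hij hik hjk
      have h₂ := hσ.elementary_apply_commutator hij.symm hjk hik
      have : σ (elementary i j hij) k + σ (elementary j i hij.symm) k = 0 := by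
        linear_combination -h₁ - h₂
      exact CharTwo.add_eq_zero.1 this
    have comm {i j k} (hij : i ≠ j) (hik : i ≠ k) := hσ.elementary_apply_comm hij hik
    intro i j k hij hik hjk
    fin_cases i <;> fin_cases j <;> fin_cases k <;> grind
  refine ⟨σ (elementary 0 1 (by decide)) 2, ![σ (elementary 1 0 (by decide)) 1,
    σ (elementary 2 1 (by decide)) 2, σ (elementary 0 2 (by decide)) 0],
    hσ.eq_of_eq_elementary (isCocycle_cubicCocycle.add_smul_coboundary _ _) ?_⟩
  intro i j hij
  ext l
  have cancel : ∀ x y : ZMod 2, x + y + x = y := by decide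
  have source {i j} (hij : i ≠ j) := hσ.elementary_apply_source hij
  have commutator {i j k} (hij : i ≠ j) (hik : i ≠ k) (hjk : j ≠ k) :=
    hσ.elementary_apply_commutator hij hik hjk
  simp only [Pi.add_apply, Pi.smul_apply, cubicCocycle_elementary, elementary_apply, smul_eq_mul]
  fin_cases i <;> fin_cases j <;> first
    | exact absurd rfl hij
    | fin_cases l <;> simp [cancel, CharTwo.add_self_eq_zero] <;> grind

/-- The cocycles representing the nontrivial class of `H¹(GL₃(𝔽₂), 𝔽₂³)`. -/
def shiftedCocycle (w : V 2 3) (A : GLV) : V 2 3 := cubicCocycle A + (A w + w)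

lemma isCocycle_shiftedCocycle (w : V 2 3) : IsCocycle (shiftedCocycle w) := by
  simpa using! isCocycle_cubicCocycle.add_smul_coboundary 1 w

/-- The complements of `𝔽₂³` in the affine group associated with `shiftedCocycle`. -/
def complement (w : V 2 3) : Subgroup (Aff 2 3) := (isCocycle_shiftedCocycle w).toAff.range

lemma conj_constVAdd_toAff (w w' : V 2 3) (A : GLV) :
    MulAut.conj (AffineEquiv.constVAdd (ZMod 2) (V 2 3) (w' + w))
      ((isCocycle_shiftedCocycle w).toAff A) = (isCocycle_shiftedCocycle w').toAff A := by
  rw [MulAut.conj_apply, mul_inv_eq_iff_eq_mul]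
  ext x : 1
  have h₁ : A w + A w = 0 := CharTwo.add_self_eq_zero _
  have h₂ : w + w = 0 := CharTwo.add_self_eq_zero _
  have h₃ : A w' + A w' = 0 := CharTwo.add_self_eq_zero _
  simp only [AffineEquiv.coe_mul, Function.comp_apply, AffineEquiv.constVAdd_apply,
    IsCocycle.toAff_apply, vadd_eq_add, shiftedCocycle, map_add]
  linear_combination (exp := 1) h₂ - h₃

lemma map_conj_constVAdd_complement (w w' : V 2 3) :
    (complement w).map
      (MulAut.conj (AffineEquiv.constVAdd (ZMod 2) (V 2 3) (w' + w))).toMonoidHom =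
      complement w' := by
  rw [complement, MonoidHom.map_range, complement]
  congr 1
  ext1 A
  exact conj_constVAdd_toAff w w' A

lemma cubicCocycle_surjective : Function.Surjective cubicCocycle := by
  have values : ∀ v : V 2 3, v = 0 ∨ v = 1 ∨ ∃ i j : Fin 3, i ≠ j ∧ v = fun k =>
      if k = j then 0 else if k = i then (if j = i + 1 then 1 else 0) else 1 := by
    decide
  intro v
  obtain rfl | rfl | ⟨i, j, h, rfl⟩ := values v
  · exact ⟨1, isCocycle_cubicCocycle.map_one⟩
  · refine ⟨elementary 1 0 (by decide) * elementary 2 1 (by decide), ?_⟩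
    rw [isCocycle_cubicCocycle, cubicCocycle_elementary, cubicCocycle_elementary]
    decide
  · exact ⟨elementary i j h, cubicCocycle_elementary h⟩

lemma complement_zero_transitive (v w : V 2 3) : ∃ g ∈ complement 0, g v = w := by
  have orbit (u : V 2 3) : ∃ g ∈ complement 0, g 0 = u := by
    obtain ⟨A, rfl⟩ := cubicCocycle_surjective u
    exact ⟨_, ⟨A, rfl⟩, by simp [IsCocycle.toAff_apply, shiftedCocycle]⟩
  obtain ⟨g, hg, rfl⟩ := orbit v
  obtain ⟨h, hh, rfl⟩ := orbit w
  exact ⟨h * g⁻¹, mul_mem hh (inv_mem hg), by simp [AffineEquiv.inv_def]⟩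

lemma complement_transitive (u v w : V 2 3) : ∃ g ∈ complement u, g v = w := by
  rw [← map_conj_constVAdd_complement 0 u]
  set t := AffineEquiv.constVAdd (ZMod 2) (V 2 3) (u + 0)
  obtain ⟨g, hg, h⟩ := complement_zero_transitive (t⁻¹ v) (t⁻¹ w)
  refine ⟨_, ⟨g, hg, rfl⟩, ?_⟩
  change t (g (t⁻¹ v)) = w
  rw [h]
  exact t.apply_symm_apply w

lemma complement_injective : Function.Injective complement := by
  intro w w' h
  have key (A : GLV) : A w + w = A w' + w' := by
    have hA : (isCocycle_shiftedCocycle w).toAff A ∈ complement w' := h ▸ ⟨A, rfl⟩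
    obtain ⟨B, hB⟩ := hA
    obtain rfl : B = A := congrArg AffineEquiv.linear hB
    simpa [IsCocycle.toAff_apply, shiftedCocycle, eq_comm] using congrArg (fun f => f 0) hB
  ext j
  obtain ⟨i, hij⟩ := exists_ne j
  have := congrFun (key (elementary i j hij)) i
  simp only [Pi.add_apply, elementary_apply, if_true] at this
  have two (x y : ZMod 2) : x + y + x = y := by decide +revert
  rwa [two, two] at this

/-- The general linear group as a group of invertible matrices or of linear automorphisms. -/
def generalLinearEquivGLV : Matrix.GeneralLinearGroup (Fin 3) (ZMod 2) ≃* GLV :=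
  Matrix.GeneralLinearGroup.toLin.trans
    (LinearMap.GeneralLinearGroup.generalLinearEquiv (ZMod 2) (V 2 3))

lemma nonempty_complement_mulEquiv (w : V 2 3) :
    Nonempty (complement w ≃* Matrix.GeneralLinearGroup (Fin 3) (ZMod 2)) :=
  ⟨(MonoidHom.ofInjective (isCocycle_shiftedCocycle w).toAff_injective).symm.trans
    generalLinearEquivGLV.symm⟩

lemma linear_injective_of_mulEquiv {G : Subgroup (Aff 2 3)} (e : G ≃* GLV) :
    Function.Injective (AffineEquiv.linearHom.comp G.subtype : G →* GLV) := by
  refine (injective_iff_map_eq_one _).2 fun g hg => ?_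
  have trans (x : V 2 3) (h : Aff 2 3) (hh : h.linear = 1) : h x = x + h 0 := by
    simpa [hh] using h.map_vadd 0 x
  have hsq (h : G) (hh : AffineEquiv.linearHom (h : Aff 2 3) = 1) (h' : G)
      (hh' : AffineEquiv.linearHom (h' : Aff 2 3) = 1) : h * h' = h' * h := by
    ext x : 2
    simp only [Subgroup.coe_mul, AffineEquiv.coe_mul, Function.comp_apply]
    rw [trans (h'.1 x) h.1 hh, trans x h.1 hh, trans x h'.1 hh', trans (x + h.1 0) h'.1 hh']
    abel
  have hgg : g * g = 1 := by
    ext x : 2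
    simp only [Subgroup.coe_mul, AffineEquiv.coe_mul, Function.comp_apply]
    rw [trans (g.1 x) g.1 hg, trans x g.1 hg, add_assoc, CharTwo.add_self_eq_zero, add_zero]
    rfl
  apply e.injective
  rw [map_one]
  refine eq_one_of_commute_conj (by rw [← map_mul, hgg, map_one]) fun b => ?_
  obtain ⟨b, rfl⟩ := e.surjective b
  rw [← map_inv, ← map_mul, ← map_mul]
  refine Commute.map (hsq _ hg _ ?_) e
  have : AffineEquiv.linearHom (g : Aff 2 3) = 1 := hg
  change AffineEquiv.linearHom ((b : Aff 2 3) * (g : Aff 2 3) * (b : Aff 2 3)⁻¹) = 1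
  rw [map_mul, map_mul, this, mul_one, ← map_mul, mul_inv_cancel, map_one]

lemma eq_complement_of_transitive {G : Subgroup (Aff 2 3)} (hG : ∀ v w : V 2 3, ∃ g ∈ G, g v = w)
    (e : G ≃* GLV) : ∃ w, G = complement w := by
  have hinj := linear_injective_of_mulEquiv e
  have : Finite GLV := Finite.of_injective (fun A : GLV => (A : V 2 3 → V 2 3))
    DFunLike.coe_injective
  have : Finite G := Finite.of_equiv _ e.symm.toEquiv
  have hsurj := (Finite.injective_iff_surjective_of_equiv e.toEquiv).1 hinj
  let f : G ≃* GLV := MulEquiv.ofBijective _ ⟨hinj, hsurj⟩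
  have hf (g : G) (x : V 2 3) : g.1 x = g.1 0 + f g x := by
    have h : g.1 x = g.1.linear x + g.1 0 := by simpa using g.1.map_vadd 0 x
    rw [h, add_comm]
    rfl
  let σ : GLV → V 2 3 := fun A => (f.symm A).1 0
  have hσ : IsCocycle σ := by
    intro A B
    simp only [σ, map_mul, Subgroup.coe_mul, AffineEquiv.coe_mul, Function.comp_apply]
    rw [hf, MulEquiv.apply_symm_apply]
  have hmem (g : G) : g.1 = hσ.toAff (f g) := by
    ext x : 1
    rw [hσ.toAff_apply, hf g x]
    simp [σ]
  have hrange : G = hσ.toAff.range := by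
    ext g
    constructor
    · exact fun hg => ⟨f ⟨g, hg⟩, (hmem ⟨g, hg⟩).symm⟩
    · rintro ⟨A, rfl⟩
      rw [← f.apply_symm_apply A, ← hmem]
      exact (f.symm A).2
  obtain ⟨c, w, hcw⟩ := hσ.exists_eq
  obtain rfl | hc := eq_or_ne c 0
  · obtain ⟨g, hg, hgw⟩ := hG w (w + Pi.single 0 1)
    have : g w = w := by
      have h₁ := hmem ⟨g, hg⟩
      simp only at h₁
      rw [h₁, hσ.toAff_apply, hcw]
      beta_reduce
      rw [zero_smul, zero_add, add_right_comm, CharTwo.add_self_eq_zero, zero_add]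
    rw [this] at hgw
    simp at hgw
  · have hc' : c = 1 := Fin.eq_one_of_ne_zero c hc
    have hσw : σ = shiftedCocycle w := by
      rw [hcw, hc']
      ext1 A
      rw [one_smul, shiftedCocycle]
    exact ⟨w, by simp only [hrange, complement, hσw]⟩

lemma exists_eq_complement_iff (G : Subgroup (Aff 2 3)) :
    ((∀ v w : V 2 3, ∃ g ∈ G, g v = w) ∧
      Nonempty (G ≃* Matrix.GeneralLinearGroup (Fin 3) (ZMod 2))) ↔ ∃ w, complement w = G := by
  constructor
  · rintro ⟨hG, ⟨e⟩⟩
    obtain ⟨w, hw⟩ := eq_complement_of_transitive hG (e.trans generalLinearEquivGLV)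
    exact ⟨w, hw.symm⟩
  · rintro ⟨w, rfl⟩
    exact ⟨complement_transitive w, nonempty_complement_mulEquiv w⟩

/-- Any two of the complements are conjugate under a linear automorphism. -/
lemma exists_linear_conj_complement (w w' : V 2 3) : ∃ A : GLV,
    (complement w).map (MulAut.conj A.toAffineEquiv).toMonoidHom = complement w' := by
  set t := AffineEquiv.constVAdd (ZMod 2) (V 2 3) (w' + w) with ht
  obtain ⟨g, hg, hgt⟩ := complement_transitive w' (t 0) 0
  have hlin : (g * t).linear.toAffineEquiv = g * t := by
    ext x : 1
    have h0 : (g * t) 0 = 0 := hgt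
    simpa [h0] using ((g * t).map_vadd 0 x).symm
  refine ⟨(g * t).linear, ?_⟩
  rw [hlin, map_mul]
  change (complement w).map ((MulAut.conj g).toMonoidHom.comp (MulAut.conj t).toMonoidHom) = _
  rw [← Subgroup.map_map, ht, map_conj_constVAdd_complement]
  exact Subgroup.conj_smul_eq_self_of_mem hg

/-- Lemma 4.1: for `V = 𝔽₂³`, the affine group `Aff(V)` contains exactly `8`
transitive subgroups isomorphic to the simple group `GL₃(𝔽₂)` of order `168`, and any
two such subgroups are conjugate by an element of `GL(V) ≤ Aff(V)`. -/
theorem stmt_9 :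
    Nat.card {G : Subgroup (Aff 2 3) //
        (∀ v w : V 2 3, ∃ g ∈ G, g v = w) ∧
        Nonempty (G ≃* Matrix.GeneralLinearGroup (Fin 3) (ZMod 2))} = 8 ∧
    ∀ G₁ G₂ : Subgroup (Aff 2 3),
      ((∀ v w : V 2 3, ∃ g ∈ G₁, g v = w) ∧
        Nonempty (G₁ ≃* Matrix.GeneralLinearGroup (Fin 3) (ZMod 2))) →
      ((∀ v w : V 2 3, ∃ g ∈ G₂, g v = w) ∧
        Nonempty (G₂ ≃* Matrix.GeneralLinearGroup (Fin 3) (ZMod 2))) →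
      ∃ A : V 2 3 ≃ₗ[ZMod 2] V 2 3,
        Subgroup.map (MulAut.conj A.toAffineEquiv).toMonoidHom G₁ = G₂ := by
  constructor
  · have hbij : Function.Bijective (Set.rangeFactorization complement) :=
      ⟨fun _ _ h => complement_injective (congrArg Subtype.val h),
        Set.rangeFactorization_surjective⟩
    have hcard := Nat.card_eq_of_bijective _ hbij
    rw [Nat.card_congr (Equiv.subtypeEquivRight exists_eq_complement_iff)]
    refine hcard.symm.trans ?_
    simp [Nat.card_eq_fintype_card]
  · intro G₁ G₂ h₁ h₂
    obtain ⟨w, rfl⟩ := (exists_eq_complement_iff G₁).1 h₁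
    obtain ⟨w', rfl⟩ := (exists_eq_complement_iff G₂).1 h₂
    exact exists_linear_conj_complement w w'
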